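/- Let s₀, s₁, s₂ ∈ ℝ, let ν ∈ ℝ³ be a unit vector, and let Q, ψ be real symmetric traceless 3×3 matrices. Define f_S′(Q) := s₁ ( Q ννᵀ + ννᵀ Q − (2/3) tr(Q ννᵀ) I₃ ) + (2/3) s₀ s₁ ( ννᵀ − (1/3) I₃ ) + 4 s₂ ( tr(Q²) − (2/3) s₀² ) Q. Then the real function t ↦ f_S(Q + t ψ) is differentiable at t = 0, with derivative equal to tr( f_S′(Q) ψ ). -/

import Mathlib

open Matrix

/-- Frobenius norm of a real 3×3 matrix: `‖A‖ = √(tr(Aᵀ A))`. -/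
noncomputable def frobNorm (A : Matrix (Fin 3) (Fin 3) ℝ) : ℝ :=
  Real.sqrt (Matrix.trace (Aᵀ * A))

/-- Surface energy density `f_S(Q) = s₁ ‖Q^{(s₀)} − P Q^{(s₀)}‖² + s₂ (‖Q^{(s₀)}‖² − s₀²)²`,
where `Q^{(s₀)} = Q + (s₀/3) I₃` and `P = I₃ − ν νᵀ`. -/
noncomputable def fS (s₀ s₁ s₂ : ℝ) (ν : Fin 3 → ℝ) (Q : Matrix (Fin 3) (Fin 3) ℝ) : ℝ :=
  s₁ * frobNorm ((Q + (s₀ / 3) • (1 : Matrix (Fin 3) (Fin 3) ℝ)) -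
      ((1 : Matrix (Fin 3) (Fin 3) ℝ) - vecMulVec ν ν) *
        (Q + (s₀ / 3) • (1 : Matrix (Fin 3) (Fin 3) ℝ))) ^ 2 +
  s₂ * (frobNorm (Q + (s₀ / 3) • (1 : Matrix (Fin 3) (Fin 3) ℝ)) ^ 2 - s₀ ^ 2) ^ 2


/-- `f_S′(Q) = s₁ (Q ννᵀ + ννᵀ Q − (2/3) tr(Q ννᵀ) I₃) + (2/3) s₀ s₁ (ννᵀ − (1/3) I₃)
    + 4 s₂ (tr(Q²) − (2/3) s₀²) Q`. -/
noncomputable def fSprime (s₀ s₁ s₂ : ℝ) (ν : Fin 3 → ℝ) (Q : Matrix (Fin 3) (Fin 3) ℝ) :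
    Matrix (Fin 3) (Fin 3) ℝ :=
  s₁ • (Q * vecMulVec ν ν + vecMulVec ν ν * Q -
      ((2 / 3 : ℝ) * Matrix.trace (Q * vecMulVec ν ν)) • (1 : Matrix (Fin 3) (Fin 3) ℝ)) +
    ((2 / 3 : ℝ) * s₀ * s₁) • (vecMulVec ν ν - (1 / 3 : ℝ) • (1 : Matrix (Fin 3) (Fin 3) ℝ)) +
    (4 * s₂ * (Matrix.trace (Q * Q) - (2 / 3 : ℝ) * s₀ ^ 2)) • Q

theorem frobNorm_sq_aux (A : Matrix (Fin 3) (Fin 3) ℝ) :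
    frobNorm A ^ 2 = Matrix.trace (Aᵀ * A) := by
  unfold frobNorm
  apply Real.sq_sqrt
  simp only [Matrix.trace, Matrix.diag, Matrix.mul_apply, Matrix.transpose_apply]
  exact Finset.sum_nonneg fun i _ => Finset.sum_nonneg fun j _ => mul_self_nonneg _

theorem quad_aux (M R ψ : Matrix (Fin 3) (Fin 3) ℝ) (t : ℝ) :
    Matrix.trace ((R + t • ψ) * M * (R + t • ψ)) =
      Matrix.trace (R * M * R) + t * (Matrix.trace (R * M * ψ) + Matrix.trace (ψ * M * R))
        + t ^ 2 * Matrix.trace (ψ * M * ψ) := by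
  simp only [add_mul, mul_add, Matrix.trace_add, Matrix.smul_mul, Matrix.mul_smul,
    Matrix.trace_smul, smul_eq_mul]
  ring

theorem deriv_aux (s₁ s₂ a b c d e f g : ℝ) :
    HasDerivAt (fun t : ℝ => s₁ * (a + t * b + t ^ 2 * c) +
      s₂ * ((d + t * e + t ^ 2 * f) - g) ^ 2) (s₁ * b + s₂ * (2 * (d - g) * e)) 0 := by
  have q : ∀ a b c : ℝ, HasDerivAt (fun t : ℝ => a + t * b + t ^ 2 * c) b 0 := by
    intro a b c
    have := (((hasDerivAt_id (0:ℝ)).mul_const b).const_add a).add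
      (((hasDerivAt_id (0:ℝ)).pow 2).mul_const c)
    refine HasDerivAt.congr_deriv this ?_
    simp
  have := ((q a b c).const_mul s₁).add ((((q d e f).sub_const g).pow 2).const_mul s₂)
  refine HasDerivAt.congr_deriv this ?_
  simp

theorem stmt_5 (s₀ s₁ s₂ : ℝ) (ν : Fin 3 → ℝ) (hν : ν ⬝ᵥ ν = 1)
    (Q ψ : Matrix (Fin 3) (Fin 3) ℝ)
    (hQsymm : Qᵀ = Q) (hQtr : Matrix.trace Q = 0)
    (hψsymm : ψᵀ = ψ) (hψtr : Matrix.trace ψ = 0) :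
    HasDerivAt (fun t : ℝ => fS s₀ s₁ s₂ ν (Q + t • ψ))
      (Matrix.trace (fSprime s₀ s₁ s₂ ν Q * ψ)) 0 := by
  set N := vecMulVec ν ν with hN
  have hNT : Nᵀ = N := by rw [hN, Matrix.transpose_vecMulVec]
  have hNN : N * N = N := by rw [hN, Matrix.vecMulVec_mul_vecMulVec, hν]; simp
  set R := Q + (s₀ / 3) • (1 : Matrix (Fin 3) (Fin 3) ℝ) with hR
  have hRT : Rᵀ = R := by simp [hR, hQsymm]
  have hfun : (fun t : ℝ => fS s₀ s₁ s₂ ν (Q + t • ψ)) = fun t : ℝ =>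
      s₁ * (trace (R * N * R) + t * (trace (R * N * ψ) + trace (ψ * N * R))
        + t ^ 2 * trace (ψ * N * ψ)) +
      s₂ * ((trace (R * 1 * R) + t * (trace (R * 1 * ψ) + trace (ψ * 1 * R))
        + t ^ 2 * trace (ψ * 1 * ψ)) - s₀ ^ 2) ^ 2 := by
    funext t
    have e : Q + t • ψ + (s₀ / 3) • (1 : Matrix (Fin 3) (Fin 3) ℝ) = R + t • ψ := by
      rw [hR]; abel
    have hT : (R + t • ψ)ᵀ = R + t • ψ := by simp [hRT, hψsymm]
    unfold fS
    rw [e, ← hN, frobNorm_sq_aux, frobNorm_sq_aux, ← quad_aux, ← quad_aux]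
    have e2 : R + t • ψ - (1 - N) * (R + t • ψ) = N * (R + t • ψ) := by
      rw [sub_mul, one_mul]; abel
    rw [e2, Matrix.transpose_mul, hT, hNT, mul_one, ← mul_assoc, mul_assoc _ N N, hNN]
  rw [hfun]
  convert deriv_aux s₁ s₂ _ _ _ _ _ _ _ using 1
  have c1 : trace (ψ * N * Q) = trace (Q * ψ * N) := by rw [Matrix.trace_mul_comm, mul_assoc]
  have c2 : trace (N * Q * ψ) = trace (Q * ψ * N) := by
    rw [mul_assoc, Matrix.trace_mul_comm]
  have c3 : trace (ψ * N) = trace (N * ψ) := Matrix.trace_mul_comm _ _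
  have c4 : trace (ψ * Q) = trace (Q * ψ) := Matrix.trace_mul_comm _ _
  unfold fSprime
  rw [← hN, hR]
  simp only [add_mul, mul_add, sub_mul, Matrix.trace_add, Matrix.trace_sub, Matrix.smul_mul,
    Matrix.mul_smul, Matrix.trace_smul, smul_eq_mul, one_mul, mul_one, hψtr, hQtr, c1, c2, c3, c4,
    Matrix.trace_one, Fintype.card_fin]
  push_cast
  ring
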